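/- If 0 ≤ δ ≤ 1/2 and (2δ)³ + (2δ)² + 2δ > 1, then there exists a nontrivial measurable set S ⊆ ℝ that has no δ-exceptional point. -/

import Mathlib

open MeasureTheory Set Filter

/-- The relative measure of `H` in the interval `(p - ε, p + ε)`,
i.e. `λ(H ∩ I_ε(p)) / (2ε)`. -/
noncomputable def relMeasure (H : Set ℝ) (p ε : ℝ) : ℝ :=
  (volume (H ∩ Ioo (p - ε) (p + ε))).toReal / (2 * ε)

/-- `p` is a `δ`-exceptional point for `S` if
`δ ≤ liminf_{ε→0⁺} λ(S ∩ I_ε(p))/(2ε)` and `limsup_{ε→0⁺} λ(S ∩ I_ε(p))/(2ε) ≤ 1 - δ`. -/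
def IsExceptionalPoint (S : Set ℝ) (δ p : ℝ) : Prop :=
  δ ≤ liminf (fun ε => relMeasure S p ε) (nhdsWithin 0 (Ioi 0)) ∧
  limsup (fun ε => relMeasure S p ε) (nhdsWithin 0 (Ioi 0)) ≤ 1 - δ

/-- A set `S ⊆ ℝ` is nontrivial if both `S` and its complement have positive measure. -/
def NontrivialSet (S : Set ℝ) : Prop := 0 < volume S ∧ 0 < volume Sᶜ

open Metric Topology
open scoped Function

/-!
Call `ε` an extreme scale at `p` if `S` or its complement has density less than `d` in
`(p - ε, p + ε)`, for some fixed `d < δ`. A point with arbitrarily small extreme scales is not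
`δ`-exceptional.

Suppose that `A` is `(-∞, 0)` outside a bounded interval, that `A` switches sides at each of its
finitely many boundary points, and that each boundary point has an extreme scale. Around each
boundary point `q`, replace `A` by a tiny copy of `A`, reflected if necessary so that it fits the
two sides of `q`, and iterate. The limit set `S` differs from `A` by a set of tiny measure, so
points near `q` inherit the extreme scale of `q`. Zooming in, this produces arbitrarily small
extreme scales at points that stay close to the boundary at every level of the construction; every
other point has small neighbourhoods on which `S` is full or empty.

For `A` take `(-∞, 0)` followed by gaps of length `1` alternating with teeth of length `c`, where
`c` is slightly less than `2δ`, except that the final tooth `(b, L)` is lengthened until all teeth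
together have length `c * b`. Then `b` and `L` are extreme scales at the points `b` and `L`, and `1`
is one at the ends of the other teeth. At `0` the scale `L` works for the complement as soon as the
gaps have total length at most `c * L`. With `N` regular teeth this reads `N + 1 ≤ c * L`, where `L`
grows like `N * (1 + c + c ^ 2)`, so that `c + c ^ 2 + c ^ 3 > 1` suffices for large `N`.
-/

section RelMeasure

variable {S T : Set ℝ} {p q r ε δ : ℝ}

theorem relMeasure_nonneg (hε : 0 ≤ ε) : 0 ≤ relMeasure S p ε := by
  unfold relMeasure
  positivity

theorem relMeasure_compl (hS : MeasurableSet S) (hε : 0 < ε) :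
    relMeasure Sᶜ p ε = 1 - relMeasure S p ε := by
  have hsplit := measureReal_inter_add_sdiff (s := Ioo (p - ε) (p + ε)) hS
    (measure_Ioo_lt_top (μ := volume)).ne
  rw [Real.volume_real_Ioo_of_le (by linarith), Set.sdiff_eq, inter_comm, inter_comm _ Sᶜ] at hsplit
  simp only [relMeasure, ← Measure.real_def]
  rw [eq_sub_iff_add_eq', ← add_div, hsplit]
  field_simp
  ring

theorem relMeasure_le_one (hS : MeasurableSet S) (hε : 0 < ε) : relMeasure S p ε ≤ 1 := by
  have hnonneg := relMeasure_nonneg (S := Sᶜ) (p := p) hε.le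
  rw [relMeasure_compl hS hε] at hnonneg
  linarith

theorem relMeasure_le_of_volume_inter_le {κ : ℝ} (hε : 0 < ε) (hκ : 0 ≤ κ)
    (h : volume (S ∩ Ioo (p - ε) (p + ε)) ≤ ENNReal.ofReal (κ * (2 * ε))) :
    relMeasure S p ε ≤ κ := by
  rw [relMeasure, div_le_iff₀ (by positivity)]
  exact ENNReal.toReal_le_of_le_ofReal (by positivity) h

theorem relMeasure_congr (h : ∀ x ∈ Ioo (p - ε) (p + ε), x ∈ S ↔ x ∈ T) :
    relMeasure S p ε = relMeasure T p ε := by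
  rw [relMeasure, relMeasure, show S ∩ Ioo (p - ε) (p + ε) = T ∩ Ioo (p - ε) (p + ε) from
    Set.ext fun x => and_congr_left (h x)]

theorem relMeasure_preimage_mul_sub {a : ℝ} (ha : a ≠ 0) :
    relMeasure ((fun x => a * (x - q)) ⁻¹' S) p ε = relMeasure S (a * (p - q)) (|a| * ε) := by
  have hball (x : ℝ) : x ∈ Ioo (p - ε) (p + ε) ↔
      a * (x - q) ∈ Ioo (a * (p - q) - |a| * ε) (a * (p - q) + |a| * ε) := by
    simp only [← Real.ball_eq_Ioo, mem_ball, Real.dist_eq, ← mul_sub, sub_sub_sub_cancel_right,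
      abs_mul, mul_lt_mul_iff_right₀ (abs_pos.mpr ha)]
  have hpre : (fun x => a * (x - q)) ⁻¹' S ∩ Ioo (p - ε) (p + ε) =
      (· - q) ⁻¹' ((a * ·) ⁻¹' (S ∩ Ioo (a * (p - q) - |a| * ε) (a * (p - q) + |a| * ε))) :=
    Set.ext fun x => and_congr_right fun _ => hball x
  have hshift (s : Set ℝ) : volume ((· - q) ⁻¹' s) = volume s := by
    simp only [sub_eq_add_neg, measure_preimage_add_right]
  rw [relMeasure, relMeasure, hpre, hshift, Real.volume_preimage_mul_left ha,
    ENNReal.toReal_mul, ENNReal.toReal_ofReal (abs_nonneg _), abs_inv]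
  have := abs_pos.mpr ha
  field_simp

theorem relMeasure_le_add_of_volume_sdiff_le {κ : ℝ} (hr : 0 < r) (hκ : 0 ≤ κ)
    (hST : volume (S \ T) ≤ ENNReal.ofReal κ) :
    relMeasure S p r ≤ relMeasure T q r + (κ + 2 * |p - q|) / (2 * r) := by
  have hcover : S ∩ Ioo (p - r) (p + r) ⊆ (T ∩ Ioo (q - r) (q + r) ∪ S \ T) ∪
      (Icc (q - r - |p - q|) (q - r) ∪ Icc (q + r) (q + r + |p - q|)) := by
    intro x ⟨hxS, hxl, hxr⟩
    have := neg_abs_le (p - q)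
    have := le_abs_self (p - q)
    simp only [mem_union, mem_inter_iff, Set.mem_sdiff, mem_Icc, mem_Ioo]
    grind
  have hT : volume (T ∩ Ioo (q - r) (q + r)) ≠ ⊤ :=
    measure_ne_top_of_subset inter_subset_right measure_Ioo_lt_top.ne
  have hvol : volume.real (S ∩ Ioo (p - r) (p + r)) ≤
      volume.real (T ∩ Ioo (q - r) (q + r)) + κ + (|p - q| + |p - q|) := by
    refine (measureReal_mono hcover ?_).trans <| (measureReal_union_le _ _).trans <|
      add_le_add ((measureReal_union_le _ _).trans ?_) ((measureReal_union_le _ _).trans ?_)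
    · exact measure_union_ne_top
        (measure_union_ne_top hT (ne_top_of_le_ne_top ENNReal.ofReal_ne_top hST))
        (measure_union_ne_top measure_Icc_lt_top.ne measure_Icc_lt_top.ne)
    · gcongr
      exact ENNReal.toReal_le_of_le_ofReal hκ hST
    · simp
  simp only [relMeasure, ← Measure.real_def, ← add_div]
  gcongr
  linarith

end RelMeasure

section ExtremeScale

variable {S T : Set ℝ} {p q r ε δ : ℝ}

/-- `ε` is an extreme scale of `S` at `p` if `S` or its complement has density less than `δ` in
`(p - ε, p + ε)`. Arbitrarily small extreme scales prevent `p` from being exceptional. -/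
def IsExtremeScale (S : Set ℝ) (δ p ε : ℝ) : Prop :=
  relMeasure S p ε < δ ∨ relMeasure Sᶜ p ε < δ

theorem isExtremeScale_congr (h : ∀ x ∈ Ioo (p - ε) (p + ε), x ∈ S ↔ x ∈ T) :
    IsExtremeScale S δ p ε ↔ IsExtremeScale T δ p ε := by
  rw [IsExtremeScale, IsExtremeScale, relMeasure_congr h,
    relMeasure_congr (S := Sᶜ) (T := Tᶜ) fun x hx => not_congr (h x hx)]

theorem isExtremeScale_preimage_mul_sub {a : ℝ} (ha : a ≠ 0) :
    IsExtremeScale ((fun x => a * (x - q)) ⁻¹' S) δ p ε ↔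
      IsExtremeScale S δ (a * (p - q)) (|a| * ε) := by
  rw [IsExtremeScale, IsExtremeScale, ← preimage_compl, relMeasure_preimage_mul_sub ha,
    relMeasure_preimage_mul_sub ha]

theorem not_isExceptionalPoint_of_frequently_isExtremeScale {d : ℝ} (hS : MeasurableSet S)
    (hd : d < δ) (h : ∃ᶠ ε in 𝓝[>] 0, IsExtremeScale S d p ε) : ¬ IsExceptionalPoint S δ p := by
  rintro ⟨hinf, hsup⟩
  have hpos : ∀ᶠ ε : ℝ in 𝓝[>] 0, 0 < ε := self_mem_nhdsWithin
  rcases frequently_or_distrib.mp h with h | h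
  · have hbdd : IsBoundedUnder (· ≥ ·) (𝓝[>] 0) fun ε => relMeasure S p ε :=
      isBoundedUnder_of_eventually_ge (hpos.mono fun ε hε => relMeasure_nonneg hε.le)
    have := liminf_le_of_frequently_le (h.mono fun ε hε => hε.le) hbdd
    linarith
  · have hbdd : IsBoundedUnder (· ≤ ·) (𝓝[>] 0) fun ε => relMeasure S p ε :=
      isBoundedUnder_of_eventually_le (hpos.mono fun ε hε => relMeasure_le_one hS hε)
    have hdense : ∃ᶠ ε in 𝓝[>] 0, 1 - d ≤ relMeasure S p ε :=
      (h.and_eventually hpos).mono fun ε ⟨hlt, hε⟩ => by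
        rw [relMeasure_compl hS hε] at hlt
        linarith
    have := le_limsup_of_frequently_le hdense hbdd
    linarith

theorem eventually_isExtremeScale_of_notMem_frontier (hp : p ∉ frontier S) (hδ : 0 < δ) :
    ∀ᶠ ε in 𝓝[>] 0, IsExtremeScale S δ p ε := by
  have hempty {T : Set ℝ} (hT : Tᶜ ∈ 𝓝 p) : ∀ᶠ ε in 𝓝[>] 0, relMeasure T p ε < δ := by
    obtain ⟨u, hu, hball⟩ := Metric.mem_nhds_iff.mp hT
    filter_upwards [Ioo_mem_nhdsGT hu] with ε hε
    have hdisj : T ∩ Ioo (p - ε) (p + ε) = ∅ := by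
      rw [← Real.ball_eq_Ioo]
      exact disjoint_iff_inter_eq_empty.mp
        (disjoint_left.mpr fun x hx hxb => hball (ball_subset_ball hε.2.le hxb) hx)
    simpa only [relMeasure, hdisj, measure_empty, ENNReal.toReal_zero, zero_div] using hδ
  rw [← mem_compl_iff, compl_frontier_eq_union_interior, mem_union] at hp
  simp only [mem_interior_iff_mem_nhds] at hp
  rcases hp with hp | hp
  · exact (hempty (T := Sᶜ) (by rwa [compl_compl])).mono fun ε => Or.inr
  · exact (hempty hp).mono fun ε => Or.inl

theorem IsExtremeScale.eventually_forall_near (h : IsExtremeScale T δ q r) (hr : 0 < r) {C : ℝ}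
    (hC : 0 ≤ C) :
    ∀ᶠ η in 𝓝[>] 0, ∀ S p, volume (symmDiff S T) ≤ ENNReal.ofReal (C * η) → |p - q| ≤ η →
      IsExtremeScale S δ p r := by
  have hone {T : Set ℝ} (hT : relMeasure T q r < δ) : ∀ᶠ η in 𝓝[>] 0, ∀ S p,
      volume (S \ T) ≤ ENNReal.ofReal (C * η) → |p - q| ≤ η → relMeasure S p r < δ := by
    have hlim : Tendsto (fun η => relMeasure T q r + (C * η + 2 * η) / (2 * r)) (𝓝[>] 0)
        (𝓝 (relMeasure T q r)) :=
      (Continuous.tendsto' (by fun_prop) _ _ (by simp)).mono_left nhdsWithin_le_nhds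
    filter_upwards [hlim.eventually_lt_const hT, self_mem_nhdsWithin] with η hη hpos S p hS hp
    calc relMeasure S p r ≤ relMeasure T q r + (C * η + 2 * |p - q|) / (2 * r) :=
          relMeasure_le_add_of_volume_sdiff_le hr (mul_nonneg hC (le_of_lt hpos)) hS
      _ ≤ relMeasure T q r + (C * η + 2 * η) / (2 * r) := by gcongr
      _ < δ := hη
  rcases h with h | h
  · filter_upwards [hone h] with η hη S p hS hp
    exact .inl (hη S p ((measure_mono subset_union_left).trans hS) hp)
  · filter_upwards [hone h] with η hη S p hS hp
    rw [← compl_symmDiff_compl] at hS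
    exact .inr (hη Sᶜ p ((measure_mono subset_union_left).trans hS) hp)

end ExtremeScale

theorem exists_measurableSet_mem_iff_apply_mem {α ι : Type*} [MeasurableSpace α] [Countable ι]
    {N : ι → Set α} {f : ι → α → α} {A : Set α} (hN : ∀ i, MeasurableSet (N i))
    (hf : ∀ i, Measurable (f i)) (hA : MeasurableSet A) (hdisj : Pairwise (Disjoint on N)) :
    ∃ S, MeasurableSet S ∧ (∀ i, ∀ x ∈ N i, (x ∈ S ↔ f i x ∈ S)) ∧
      ∀ x, (∀ i, x ∉ N i) → (x ∈ S ↔ x ∈ A) := by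
  -- `stage n` holds the points whose orbit leaves `⋃ i, N i` after exactly `n` steps, into `A`.
  let stage (n : ℕ) : Set α := (fun s => ⋃ i, N i ∩ f i ⁻¹' s)^[n] (A \ ⋃ i, N i)
  have stage_succ (n : ℕ) : stage (n + 1) = ⋃ i, N i ∩ f i ⁻¹' stage n :=
    Function.iterate_succ_apply' _ _ _
  have measurableSet_stage (n : ℕ) : MeasurableSet (stage n) := by
    induction n with
    | zero => exact hA.diff (.iUnion hN)
    | succ n ih =>
      rw [stage_succ]
      exact .iUnion fun i => (hN i).inter (hf i ih)
  have mem_stages_iff (x : α) : x ∈ ⋃ n, stage n ↔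
      x ∈ A \ ⋃ i, N i ∨ ∃ i, x ∈ N i ∧ f i x ∈ ⋃ n, stage n := by
    rw [mem_iUnion, ← Nat.or_exists_add_one]
    refine or_congr Iff.rfl ?_
    simp only [stage_succ, mem_iUnion, mem_inter_iff, mem_preimage, ← exists_and_left]
    exact exists_comm
  refine ⟨⋃ n, stage n, .iUnion measurableSet_stage, fun i x hx => ?_, fun x hx => ?_⟩
  · have hi (j : ι) (hj : x ∈ N j) : j = i :=
      by_contra fun hji => disjoint_left.mp (hdisj hji) hj hx
    rw [mem_stages_iff x]
    constructor
    · rintro (⟨-, hx'⟩ | ⟨j, hj, hfx⟩)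
      · exact absurd (mem_iUnion_of_mem i hx) hx'
      · rwa [hi j hj] at hfx
    · exact fun hfx => .inr ⟨i, hx, hfx⟩
  · rw [mem_stages_iff x]
    simp [hx]

theorem measurableSet_of_finite_frontier {X : Type*} [TopologicalSpace X] [MeasurableSpace X]
    [BorelSpace X] [T1Space X] {s : Set X} (hs : (frontier s).Finite) : MeasurableSet s := by
  rw [← sdiff_union_inter s (frontier s), self_sdiff_frontier]
  exact isOpen_interior.measurableSet.union (hs.subset inter_subset_right).measurableSet

/-- A set which is `(-∞, 0)` outside a bounded interval and has finitely many boundary points, at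
each of which it lies locally on exactly one side: the left if `s = 1`, the right if `s = -1`. Such
sets are the generators of the self-similar construction. -/
structure IsStepPattern (A : Set ℝ) : Prop where
  finite_frontier : (frontier A).Finite
  exists_sign : ∀ q ∈ frontier A,
    ∃ s : ℝ, |s| = 1 ∧ ∀ᶠ x in 𝓝[≠] q, (x ∈ A ↔ s * (x - q) < 0)
  eventually_cocompact : ∀ᶠ x in cocompact ℝ, (x ∈ A ↔ x < 0)

/-- The parameters of the self-similar construction generated by `A`: around each boundary point
`q`, the set is replaced in `closedBall q radius` by a shrunken copy of the whole construction,
reflected when `sign q = -1`. Outside `(-bound, bound)` the set `A` is `(-∞, 0)`. -/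
structure ZoomData (A : Set ℝ) where
  sign : ℝ → ℝ
  radius : ℝ
  bound : ℝ
  radius_pos : 0 < radius
  radius_lt_bound : radius < bound
  abs_add_radius_lt_bound : ∀ q ∈ frontier A, |q| + radius < bound
  abs_sign : ∀ q ∈ frontier A, |sign q| = 1
  pairwiseDisjoint : (frontier A).PairwiseDisjoint (closedBall · radius)
  mem_iff_sign : ∀ q ∈ frontier A, ∀ x ∈ closedBall q radius, x ≠ q →
    (x ∈ A ↔ sign q * (x - q) < 0)
  mem_iff_neg : ∀ x, bound ≤ |x| → (x ∈ A ↔ x < 0)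

theorem IsStepPattern.eventually_exists_zoomData {A : Set ℝ} (hA : IsStepPattern A) (M : ℝ) :
    ∀ᶠ η in 𝓝[>] 0, ∃ D : ZoomData A, D.radius = η ∧ M ≤ D.bound := by
  choose! sign abs_sign hsign using hA.exists_sign
  have hdisj : ∀ᶠ η : ℝ in 𝓝[>] 0, ∀ q ∈ frontier A, ∀ q' ∈ frontier A, q ≠ q' →
      η + η < dist q q' := by
    refine (eventually_all_finite hA.finite_frontier).mpr fun q _ =>
      (eventually_all_finite hA.finite_frontier).mpr fun q' _ => ?_
    refine eventually_imp_distrib_left.mpr fun hne => ?_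
    exact (Continuous.tendsto' (f := fun η : ℝ => η + η) (by fun_prop) 0 0 (by simp)).mono_left
      nhdsWithin_le_nhds |>.eventually_lt_const (dist_pos.mpr hne)
  have hside : ∀ᶠ η in 𝓝[>] 0, ∀ q ∈ frontier A, ∀ x ∈ closedBall q η, x ≠ q →
      (x ∈ A ↔ sign q * (x - q) < 0) := by
    refine (eventually_all_finite hA.finite_frontier).mpr fun q hq => ?_
    obtain ⟨u, hu, hball⟩ := Metric.eventually_nhds_iff_ball.mp
      (eventually_nhdsWithin_iff.mp (hsign q hq))
    filter_upwards [Ioo_mem_nhdsGT hu] with η hη x hx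
    exact hball x (closedBall_subset_ball hη.2 hx)
  obtain ⟨R, hR⟩ := Metric.mem_cocompact_iff_closedBall_compl_subset 0 |>.mp
    hA.eventually_cocompact
  obtain ⟨Q, hQ⟩ := hA.finite_frontier.isBounded.exists_norm_le
  filter_upwards [hdisj, hside, self_mem_nhdsWithin] with η hdisj hside hη
  rw [mem_Ioi] at hη
  refine ⟨{
    sign, abs_sign
    radius := η
    bound := |M| + |R| + |Q| + η + 1
    radius_pos := hη
    radius_lt_bound := by linarith [abs_nonneg M, abs_nonneg R, abs_nonneg Q]
    abs_add_radius_lt_bound := fun q hq => ?_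
    pairwiseDisjoint := fun q hq q' hq' hne =>
      closedBall_disjoint_closedBall (hdisj q hq q' hq' hne)
    mem_iff_sign := hside
    mem_iff_neg := fun x hx => hR ?_ }, rfl, ?_⟩
  · have : |q| ≤ Q := hQ q hq
    linarith [abs_nonneg M, abs_nonneg R, le_abs_self Q]
  · rw [mem_compl_iff, mem_closedBall_zero_iff, Real.norm_eq_abs, not_le]
    linarith [abs_nonneg M, le_abs_self R, abs_nonneg Q]
  · linarith [le_abs_self M, abs_nonneg R, abs_nonneg Q]

namespace ZoomData

variable {A S : Set ℝ} {p q ε d x : ℝ} (D : ZoomData A)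

/-- The factor by which the construction expands around each boundary point; it is chosen so that
the half-radius ball is expanded to the interval `[-bound, bound]`. -/
noncomputable def factor : ℝ := 2 * D.bound / D.radius

/-- The similarity which sends the local picture at the boundary point `q` to the global one. -/
noncomputable def zoom (q x : ℝ) : ℝ := D.factor * D.sign q * (x - q)

/-- `S` is a self-similar set generated by `A`: it is invariant under zooming in on a boundary
point of `A` and agrees with `A` elsewhere. -/
structure IsRefinement (S : Set ℝ) : Prop where
  mem_iff_zoom_mem : ∀ q ∈ frontier A, ∀ x ∈ closedBall q D.radius, (x ∈ S ↔ D.zoom q x ∈ S)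
  mem_iff_mem : ∀ x, (∀ q ∈ frontier A, x ∉ closedBall q D.radius) → (x ∈ S ↔ x ∈ A)

theorem exists_isRefinement (hA : (frontier A).Finite) :
    ∃ S, MeasurableSet S ∧ D.IsRefinement S := by
  have := hA.countable.to_subtype
  obtain ⟨S, hS, hnear, hfar⟩ := exists_measurableSet_mem_iff_apply_mem
    (N := fun q : frontier A => closedBall (q : ℝ) D.radius) (f := fun q => D.zoom q)
    (fun _ => measurableSet_closedBall) (fun q => by unfold zoom; fun_prop)
    (measurableSet_of_finite_frontier hA)
    (D.pairwiseDisjoint.subtype _ _)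
  exact ⟨S, hS, fun q hq => hnear ⟨q, hq⟩, fun x hx => hfar x fun q => hx q q.2⟩

theorem bound_pos : 0 < D.bound := D.radius_pos.trans D.radius_lt_bound

theorem two_lt_factor : 2 < D.factor := by
  rw [factor, lt_div_iff₀ D.radius_pos]
  linarith [D.radius_lt_bound]

theorem abs_factor_mul_sign (hq : q ∈ frontier A) : |D.factor * D.sign q| = D.factor := by
  rw [abs_mul, D.abs_sign q hq, mul_one, abs_of_pos (two_pos.trans D.two_lt_factor)]

namespace IsRefinement

variable {D} (hS : D.IsRefinement S)
include hS

theorem mem_iff_neg (hx : D.bound ≤ |x|) : x ∈ S ↔ x < 0 := by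
  rw [hS.mem_iff_mem x fun q hq hxq => ?_, D.mem_iff_neg x hx]
  have := D.abs_add_radius_lt_bound q hq
  have := abs_sub_abs_le_abs_sub x q
  rw [mem_closedBall, Real.dist_eq] at hxq
  linarith

theorem nontrivialSet : NontrivialSet S := by
  have := D.bound_pos
  have hneg : Iio (-D.bound) ⊆ S := fun x hx => by
    rw [mem_Iio] at hx
    exact (hS.mem_iff_neg (le_abs.mpr (.inr (by linarith)))).mpr (by linarith)
  have hpos : Ioi D.bound ⊆ Sᶜ := fun x hx hxS => by
    rw [mem_Ioi] at hx
    have := (hS.mem_iff_neg (le_abs.mpr (.inl hx.le))).mp hxS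
    linarith
  exact ⟨(by simp : 0 < volume (Iio (-D.bound))).trans_le (measure_mono hneg),
    (by simp : 0 < volume (Ioi D.bound)).trans_le (measure_mono hpos)⟩

theorem mem_iff_mem_of_half_radius_lt (hx : ∀ q ∈ frontier A, D.radius / 2 < dist x q) :
    x ∈ S ↔ x ∈ A := by
  by_cases hfar : ∀ q ∈ frontier A, x ∉ closedBall q D.radius
  · exact hS.mem_iff_mem x hfar
  push Not at hfar
  obtain ⟨q, hq, hxq⟩ := hfar
  have hdist := hx q hq
  have hbound : D.bound ≤ |D.zoom q x| := by
    rw [zoom, abs_mul, D.abs_factor_mul_sign hq, ← Real.dist_eq, factor, div_mul_eq_mul_div,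
      le_div_iff₀ D.radius_pos]
    nlinarith [D.bound_pos]
  have hne : x ≠ q := dist_pos.mp ((half_pos D.radius_pos).trans hdist)
  rw [hS.mem_iff_zoom_mem q hq x hxq, hS.mem_iff_neg hbound, D.mem_iff_sign q hq x hxq hne, zoom,
    mul_assoc]
  exact smul_neg_iff_of_pos_left (two_pos.trans D.two_lt_factor)

theorem volume_symmDiff_le (hA : (frontier A).Finite) :
    volume (symmDiff S A) ≤ ENNReal.ofReal (2 * (frontier A).ncard * D.radius) := by
  have hcover : symmDiff S A ⊆ ⋃ q ∈ hA.toFinset, closedBall q D.radius := by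
    intro x hx
    by_contra hfar
    simp only [Finite.mem_toFinset, mem_iUnion, exists_prop, not_exists, not_and] at hfar
    have := hS.mem_iff_mem x hfar
    grind
  calc volume (symmDiff S A) ≤ ∑ q ∈ hA.toFinset, volume (closedBall q D.radius) :=
        (measure_mono hcover).trans (measure_biUnion_finset_le _ _)
    _ = ENNReal.ofReal (2 * (frontier A).ncard * D.radius) := by
        simp only [Real.volume_closedBall, Finset.sum_const, nsmul_eq_mul,
          ← ncard_eq_toFinset_card _ hA]
        rw [← ENNReal.ofReal_natCast, ← ENNReal.ofReal_mul (by positivity)]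
        ring_nf

theorem eventually_isExtremeScale_of_half_radius_lt (hA : (frontier A).Finite)
    (hp : ∀ q ∈ frontier A, D.radius / 2 < dist p q) (hd : 0 < d) :
    ∀ᶠ ε in 𝓝[>] 0, IsExtremeScale S d p ε := by
  have hnear : ∀ᶠ x in 𝓝 p, (x ∈ S ↔ x ∈ A) :=
    ((eventually_all_finite hA).mpr fun q hq =>
      (continuous_id.dist continuous_const).continuousAt.eventually (lt_mem_nhds (hp q hq))).mono
        fun x hx => hS.mem_iff_mem_of_half_radius_lt hx
  obtain ⟨u, hu, hball⟩ := Metric.eventually_nhds_iff_ball.mp hnear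
  have hpA : p ∉ frontier A := fun hmem =>
    (half_pos D.radius_pos).not_gt (dist_self p ▸ hp p hmem)
  filter_upwards [eventually_isExtremeScale_of_notMem_frontier hpA hd, Ioo_mem_nhdsGT hu]
    with ε hε hεu
  refine (isExtremeScale_congr fun x hx => hball x ?_).mpr hε
  rw [← Real.ball_eq_Ioo] at hx
  exact ball_subset_ball hεu.2.le hx

theorem isExtremeScale_div_factor (hq : q ∈ frontier A) (hp : p ∈ closedBall q (D.radius / 2))
    (hε : ε ≤ D.bound) (h : IsExtremeScale S d (D.zoom q p) ε) :
    IsExtremeScale S d p (ε / D.factor) := by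
  have hfactor : 0 < D.factor := two_pos.trans D.two_lt_factor
  have hsmall : ε / D.factor ≤ D.radius / 2 := by
    rw [div_le_iff₀ hfactor, factor]
    have := D.radius_pos
    field_simp
    exact hε
  have hball (x : ℝ) (hx : x ∈ Ioo (p - ε / D.factor) (p + ε / D.factor)) :
      x ∈ S ↔ x ∈ (fun x => D.factor * D.sign q * (x - q)) ⁻¹' S := by
    refine hS.mem_iff_zoom_mem q hq x ?_
    rw [← Real.ball_eq_Ioo, mem_ball] at hx
    rw [mem_closedBall] at hp ⊢
    linarith [dist_triangle x p q]
  rw [isExtremeScale_congr hball, isExtremeScale_preimage_mul_sub, D.abs_factor_mul_sign hq,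
    mul_div_cancel₀ _ hfactor.ne']
  · exact h
  · rw [← abs_pos, D.abs_factor_mul_sign hq]
    exact hfactor

theorem exists_isExtremeScale_le (hA : (frontier A).Finite) (hd : 0 < d)
    (hbase : ∀ q ∈ frontier A, ∀ p ∈ closedBall q (D.radius / 2),
      ∃ r, 0 < r ∧ r ≤ D.bound ∧ IsExtremeScale S d p r) (n : ℕ) (p : ℝ) :
    ∃ ε, 0 < ε ∧ ε ≤ D.bound / D.factor ^ n ∧ IsExtremeScale S d p ε := by
  have hfactor : 1 < D.factor := one_lt_two.trans D.two_lt_factor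
  have hscale (n : ℕ) : 0 < D.bound / D.factor ^ n := div_pos D.bound_pos (by positivity)
  have of_half_radius_lt (n : ℕ) (p : ℝ) (hp : ∀ q ∈ frontier A, D.radius / 2 < dist p q) :
      ∃ ε, 0 < ε ∧ ε ≤ D.bound / D.factor ^ n ∧ IsExtremeScale S d p ε := by
    obtain ⟨ε, hε, hεpos, hεle⟩ := (hS.eventually_isExtremeScale_of_half_radius_lt hA hp hd |>.and
      (Ioc_mem_nhdsGT (hscale n))).exists
    exact ⟨ε, hεpos, hεle, hε⟩
  induction n generalizing p with
  | zero =>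
    by_cases hp : ∀ q ∈ frontier A, D.radius / 2 < dist p q
    · exact of_half_radius_lt 0 p hp
    push Not at hp
    obtain ⟨q, hq, hpq⟩ := hp
    simpa using hbase q hq p hpq
  | succ n ih =>
    by_cases hp : ∀ q ∈ frontier A, D.radius / 2 < dist p q
    · exact of_half_radius_lt (n + 1) p hp
    push Not at hp
    obtain ⟨q, hq, hpq⟩ := hp
    obtain ⟨ε, hεpos, hεle, hε⟩ := ih (D.zoom q p)
    refine ⟨ε / D.factor, div_pos hεpos (by linarith), ?_, hS.isExtremeScale_div_factor hq hpq
      (hεle.trans (div_le_self D.bound_pos.le (one_le_pow₀ hfactor.le))) hε⟩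
    rw [pow_succ, ← div_div]
    gcongr

theorem frequently_isExtremeScale (hA : (frontier A).Finite) (hd : 0 < d)
    (hbase : ∀ q ∈ frontier A, ∀ p ∈ closedBall q (D.radius / 2),
      ∃ r, 0 < r ∧ r ≤ D.bound ∧ IsExtremeScale S d p r) (p : ℝ) :
    ∃ᶠ ε in 𝓝[>] 0, IsExtremeScale S d p ε := by
  have hfactor : 1 < D.factor := one_lt_two.trans D.two_lt_factor
  refine frequently_iff.mpr fun {U} hU => ?_
  obtain ⟨u, hu, hsub⟩ := mem_nhdsGT_iff_exists_Ioo_subset.mp hU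
  have hu : 0 < u := hu
  obtain ⟨n, hn⟩ := pow_unbounded_of_one_lt (D.bound / u) hfactor
  obtain ⟨ε, hεpos, hεle, hε⟩ := hS.exists_isExtremeScale_le hA hd hbase n p
  refine ⟨ε, hsub ⟨hεpos, hεle.trans_lt ?_⟩, hε⟩
  rwa [div_lt_comm₀ (by positivity) hu]

end IsRefinement

end ZoomData

theorem IsStepPattern.exists_forall_frequently_isExtremeScale {A : Set ℝ} {d : ℝ}
    (hA : IsStepPattern A) (hd : 0 < d)
    (hscale : ∀ q ∈ frontier A, ∃ r, 0 < r ∧ IsExtremeScale A d q r) :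
    ∃ S, MeasurableSet S ∧ NontrivialSet S ∧ ∀ p, ∃ᶠ ε in 𝓝[>] 0, IsExtremeScale S d p ε := by
  choose! r r_pos hr using hscale
  obtain ⟨M, hM⟩ := (hA.finite_frontier.image r).bddAbove
  have hnear := (eventually_all_finite hA.finite_frontier).mpr fun q hq =>
    (hr q hq).eventually_forall_near (r_pos q hq) (C := 2 * (frontier A).ncard) (by positivity)
  obtain ⟨η, ⟨D, rfl, hMD⟩, hη⟩ := ((hA.eventually_exists_zoomData M).and hnear).exists
  obtain ⟨S, hSmeas, hS⟩ := D.exists_isRefinement hA.finite_frontier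
  refine ⟨S, hSmeas, hS.nontrivialSet,
    hS.frequently_isExtremeScale hA.finite_frontier hd fun q hq p hp => ?_⟩
  rw [mem_closedBall, Real.dist_eq] at hp
  exact ⟨r q, r_pos q hq, (hM (mem_image_of_mem r hq)).trans hMD,
    hη q hq S p (hS.volume_symmDiff_le hA.finite_frontier) (by linarith [D.radius_pos])⟩

section UnionIoo

variable {A : Set ℝ} {a b t m : ℝ}

theorem frontier_union_Ioo_subset (hab : a < b) : frontier (A ∪ Ioo a b) ⊆ frontier A ∪ {a, b} := by
  rw [← frontier_Ioo hab]
  exact (frontier_union_subset A (Ioo a b)).trans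
    (union_subset_union inter_subset_left inter_subset_right)

theorem isStepPattern_Iio_zero : IsStepPattern (Iio 0) where
  finite_frontier := by simp
  exists_sign q hq := by
    rw [frontier_Iio, mem_singleton_iff] at hq
    exact ⟨1, abs_one, .of_forall fun x => by simp [hq]⟩
  eventually_cocompact := .of_forall fun x => Iff.rfl

theorem IsStepPattern.union_Ioo (hA : IsStepPattern A) (hAt : A ⊆ Iic t) (hta : t < a) (ha : 0 ≤ a)
    (hab : a < b) : IsStepPattern (A ∪ Ioo a b) where
  finite_frontier :=
    (hA.finite_frontier.union (toFinite {a, b})).subset (frontier_union_Ioo_subset hab)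
  exists_sign q hq := by
    rcases frontier_union_Ioo_subset hab hq with hqA | rfl | rfl
    · obtain ⟨s, hs, hsign⟩ := hA.exists_sign q hqA
      have hqa : q < a := (closure_minimal hAt isClosed_Iic hqA.1).trans_lt hta
      refine ⟨s, hs, ?_⟩
      filter_upwards [hsign, nhdsWithin_le_nhds (Iio_mem_nhds hqa)] with x hx hxa
      rw [← hx]
      grind
    · refine ⟨-1, by simp, ?_⟩
      filter_upwards [nhdsWithin_le_nhds (Ioo_mem_nhds hta hab)] with x hx
      have : x ∉ A := fun hxA => hx.1.not_ge (hAt hxA)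
      grind
    · refine ⟨1, abs_one, ?_⟩
      filter_upwards [nhdsWithin_le_nhds (Ioi_mem_nhds hab)] with x hx
      have : x ∉ A := fun hxA => (hta.trans hx).not_ge (hAt hxA)
      grind
  eventually_cocompact := by
    filter_upwards [hA.eventually_cocompact, (isCompact_Icc (a := a) (b := b)).compl_mem_cocompact]
      with x hxA hx
    grind

theorem volume_union_Ioo_inter_le {B : Set ℝ} (hm : 0 ≤ m) (hab : a ≤ b)
    (hA : volume (A ∩ B) ≤ ENNReal.ofReal m) :
    volume ((A ∪ Ioo a b) ∩ B) ≤ ENNReal.ofReal (m + (b - a)) := by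
  rw [union_inter_distrib_right, ENNReal.ofReal_add hm (sub_nonneg.mpr hab), ← Real.volume_Ioo]
  exact (measure_union_le _ _).trans (add_le_add hA (measure_mono inter_subset_left))

theorem volume_compl_union_Ioo_inter_Iio_le (hm : 0 ≤ m) (hta : t ≤ a)
    (hA : volume (Aᶜ ∩ Iio t) ≤ ENNReal.ofReal m) :
    volume ((A ∪ Ioo a b)ᶜ ∩ Iio b) ≤ ENNReal.ofReal (m + (a - t)) := by
  have hcover : (A ∪ Ioo a b)ᶜ ∩ Iio b ⊆ Aᶜ ∩ Iio t ∪ Icc t a := fun x hx => by grind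
  rw [ENNReal.ofReal_add hm (sub_nonneg.mpr hta), ← Real.volume_Icc]
  exact (measure_mono hcover).trans <| (measure_union_le _ _).trans (add_le_add_left hA _)

end UnionIoo

/-- The half-line `(-∞, 0)` together with `N` teeth of length `c`, each preceded by a gap of
length `1`. -/
def comb (c : ℝ) : ℕ → Set ℝ
  | 0 => Iio 0
  | N + 1 => comb c N ∪ Ioo (N * (1 + c) + 1) ((N + 1) * (1 + c))

/-- Szenes' pattern: `comb c N` followed by one more gap of length `1` and a final tooth, whose
length `c + N * c ^ 2` is chosen such that all teeth together have length `c * b`, where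
`b = N * (1 + c) + 1` is the start of the final tooth. -/
def cappedComb (c : ℝ) (N : ℕ) : Set ℝ :=
  comb c N ∪ Ioo (N * (1 + c) + 1) (N * (1 + c) + 1 + (c + N * c ^ 2))

section Comb

variable {c d : ℝ} {N : ℕ}

theorem comb_subset_Iic (hc : 0 ≤ c) : comb c N ⊆ Iic (N * (1 + c)) := by
  induction N with
  | zero => simp [comb]
  | succ N ih =>
    rw [comb, Nat.cast_succ]
    exact union_subset (ih.trans (Iic_subset_Iic.mpr (by linarith)))
      (Ioo_subset_Iio_self.trans Iio_subset_Iic_self)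

theorem isStepPattern_comb (hc : 0 < c) : IsStepPattern (comb c N) := by
  induction N with
  | zero => exact isStepPattern_Iio_zero
  | succ N ih =>
    exact ih.union_Ioo (comb_subset_Iic hc.le) (by linarith) (by positivity) (by linarith)

theorem isStepPattern_cappedComb (hc : 0 < c) : IsStepPattern (cappedComb c N) :=
  (isStepPattern_comb hc).union_Ioo (comb_subset_Iic hc.le) (by linarith) (by positivity)
    (lt_add_of_pos_right _ (by positivity))

theorem eq_of_mem_frontier_comb (hc : 0 < c) {q : ℝ} (hq : q ∈ frontier (comb c N)) :
    q = 0 ∨ ∃ k < N, q = k * (1 + c) + 1 ∨ q = (k + 1) * (1 + c) := by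
  induction N with
  | zero => exact .inl (by simpa [comb] using hq)
  | succ N ih =>
    rcases frontier_union_Ioo_subset (by linarith) hq with hq | hq
    · exact (ih hq).imp_right fun ⟨k, hk, hqk⟩ => ⟨k, hk.trans N.lt_succ_self, hqk⟩
    · exact .inr ⟨N, N.lt_succ_self, hq⟩

theorem volume_comb_inter_Ioi_le (hc : 0 ≤ c) :
    volume (comb c N ∩ Ioi 0) ≤ ENNReal.ofReal (N * c) := by
  induction N with
  | zero => simp [comb, inter_comm (Iio (0 : ℝ)), Ioi_inter_Iio]
  | succ N ih =>
    rw [comb]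
    refine (volume_union_Ioo_inter_le (by positivity) (by linarith) ih).trans_eq ?_
    push_cast
    ring_nf

theorem volume_cappedComb_inter_Ioi_le (hc : 0 ≤ c) :
    volume (cappedComb c N ∩ Ioi 0) ≤ ENNReal.ofReal (c * (N * (1 + c) + 1)) := by
  refine (volume_union_Ioo_inter_le (by positivity) (le_add_of_nonneg_right (by positivity))
    (volume_comb_inter_Ioi_le hc)).trans_eq ?_
  ring_nf

theorem volume_compl_comb_inter_Iio_le :
    volume ((comb c N)ᶜ ∩ Iio (N * (1 + c))) ≤ ENNReal.ofReal N := by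
  induction N with
  | zero => simp [comb, Ici_inter_Iio]
  | succ N ih =>
    rw [comb, Nat.cast_succ]
    refine (volume_compl_union_Ioo_inter_Iio_le N.cast_nonneg (by linarith) ih).trans_eq ?_
    ring_nf

theorem comb_inter_Ioo_subset (hc : 0 ≤ c) (k : ℕ) :
    comb c N ∩ Ioo (k * (1 + c)) ((k + 1) * (1 + c) + 1) ⊆
      Ioo (k * (1 + c) + 1) ((k + 1) * (1 + c)) := by
  induction N with
  | zero =>
    rintro x ⟨hx0 : x < 0, hx, -⟩
    nlinarith [k.cast_nonneg (α := ℝ)]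
  | succ N ih =>
    rintro x ⟨hx | hx, hxk⟩
    · exact ih ⟨hx, hxk⟩
    rcases lt_trichotomy N k with hNk | rfl | hkN
    · have : (N + 1 : ℝ) * (1 + c) ≤ k * (1 + c) := by gcongr; exact_mod_cast hNk
      linarith [hx.2, hxk.1]
    · exact hx
    · have : (k + 1 : ℝ) * (1 + c) ≤ N * (1 + c) := by gcongr; exact_mod_cast hkN
      linarith [hx.1, hxk.2]

theorem cappedComb_inter_Ioo_subset (hc : 0 ≤ c) {k : ℕ} (hk : k < N) :
    cappedComb c N ∩ Ioo (k * (1 + c)) ((k + 1) * (1 + c) + 1) ⊆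
      Ioo (k * (1 + c) + 1) ((k + 1) * (1 + c)) := by
  rintro x ⟨hx | hx, hxk⟩
  · exact comb_inter_Ioo_subset hc k ⟨hx, hxk⟩
  · have : (k + 1 : ℝ) * (1 + c) ≤ N * (1 + c) := by gcongr; exact_mod_cast hk
    linarith [hx.1, hxk.2]

theorem isExtremeScale_cappedComb_zero (hc : 0 ≤ c) (hcd : c / 2 < d)
    (hN : N + 1 ≤ c * (N * (1 + c) + 1 + (c + N * c ^ 2))) :
    IsExtremeScale (cappedComb c N) d 0 (N * (1 + c) + 1 + (c + N * c ^ 2)) := by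
  refine .inr ((relMeasure_le_of_volume_inter_le (by positivity) (by positivity) ?_).trans_lt hcd)
  calc _ ≤ volume ((cappedComb c N)ᶜ ∩ Iio (N * (1 + c) + 1 + (c + N * c ^ 2))) := by
        rw [zero_add]
        gcongr
        exact Ioo_subset_Iio_self
    _ ≤ ENNReal.ofReal (N + (N * (1 + c) + 1 - N * (1 + c))) :=
        volume_compl_union_Ioo_inter_Iio_le N.cast_nonneg (by linarith)
          volume_compl_comb_inter_Iio_le
    _ ≤ _ := ENNReal.ofReal_le_ofReal (by linarith)

theorem isExtremeScale_cappedComb_one (hc : 0 ≤ c) (hcd : c / 2 < d) {k : ℕ} (hk : k < N) {q : ℝ}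
    (hq : q ∈ Icc (k * (1 + c) + 1) ((k + 1) * (1 + c))) :
    IsExtremeScale (cappedComb c N) d q 1 := by
  refine .inl ((relMeasure_le_of_volume_inter_le one_pos (by positivity) ?_).trans_lt hcd)
  calc _ ≤ volume (Ioo (k * (1 + c) + 1) ((k + 1) * (1 + c))) :=
        measure_mono <| (inter_subset_inter_right _ (Ioo_subset_Ioo (by linarith [hq.1])
          (by linarith [hq.2]))).trans (cappedComb_inter_Ioo_subset hc hk)
    _ = ENNReal.ofReal (c / 2 * (2 * 1)) := by
        rw [Real.volume_Ioo]
        ring_nf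

theorem isExtremeScale_cappedComb_self (hc : 0 ≤ c) (hcd : c / 2 < d) {q : ℝ}
    (hq : N * (1 + c) + 1 ≤ q) : IsExtremeScale (cappedComb c N) d q q := by
  have hq_pos : 0 < q := lt_of_lt_of_le (by positivity) hq
  refine .inl ((relMeasure_le_of_volume_inter_le hq_pos (by positivity) ?_).trans_lt hcd)
  calc _ ≤ volume (cappedComb c N ∩ Ioi 0) := by
        rw [sub_self]
        gcongr
        exact Ioo_subset_Ioi_self
    _ ≤ ENNReal.ofReal (c * (N * (1 + c) + 1)) := volume_cappedComb_inter_Ioi_le hc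
    _ ≤ ENNReal.ofReal (c / 2 * (2 * q)) := by
        exact ENNReal.ofReal_le_ofReal (by linarith [mul_le_mul_of_nonneg_left hq hc])

theorem exists_isExtremeScale_cappedComb (hc : 0 < c) (hcd : c / 2 < d)
    (hN : N + 1 ≤ c * (N * (1 + c) + 1 + (c + N * c ^ 2))) {q : ℝ}
    (hq : q ∈ frontier (cappedComb c N)) :
    ∃ r, 0 < r ∧ IsExtremeScale (cappedComb c N) d q r := by
  rcases frontier_union_Ioo_subset (lt_add_of_pos_right _ (by positivity)) hq with hq | rfl | rfl
  · rcases eq_of_mem_frontier_comb hc hq with rfl | ⟨k, hk, rfl | rfl⟩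
    · exact ⟨_, by positivity, isExtremeScale_cappedComb_zero hc.le hcd hN⟩
    · exact ⟨1, one_pos, isExtremeScale_cappedComb_one hc.le hcd hk ⟨le_rfl, by linarith⟩⟩
    · exact ⟨1, one_pos, isExtremeScale_cappedComb_one hc.le hcd hk ⟨by linarith, le_rfl⟩⟩
  · exact ⟨_, by positivity, isExtremeScale_cappedComb_self hc.le hcd le_rfl⟩
  · exact ⟨_, by positivity, isExtremeScale_cappedComb_self hc.le hcd
      (le_add_of_nonneg_right (by positivity))⟩

end Comb

theorem exists_nat_add_one_le_of_one_lt_cubic {c : ℝ} (hc : 1 < c ^ 3 + c ^ 2 + c) :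
    ∃ N : ℕ, N + 1 ≤ c * (N * (1 + c) + 1 + (c + N * c ^ 2)) := by
  obtain ⟨N, hN⟩ := exists_nat_ge ((1 - c - c ^ 2) / (c ^ 3 + c ^ 2 + c - 1))
  rw [div_le_iff₀ (sub_pos.mpr hc)] at hN
  exact ⟨N, by linarith⟩

theorem exists_lt_one_lt_cubic {x : ℝ} (hx : 1 < x ^ 3 + x ^ 2 + x) :
    ∃ c, 0 < c ∧ c < x ∧ 1 < c ^ 3 + c ^ 2 + c := by
  have hpos : 0 < x := by
    by_contra! hneg
    nlinarith [mul_nonneg (neg_nonneg.mpr hneg) (by nlinarith : 0 ≤ x ^ 2 + x + 1)]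
  have hlim : ContinuousAt (fun c : ℝ => c ^ 3 + c ^ 2 + c) x := by fun_prop
  obtain ⟨c, hc, hc0, hcx⟩ := (((hlim.eventually_const_lt hx).filter_mono
    nhdsWithin_le_nhds).and (Ioo_mem_nhdsLT hpos)).exists
  exact ⟨c, hc0, hcx, hc⟩

/-- If `0 ≤ δ ≤ 1/2` and `(2δ)³ + (2δ)² + 2δ > 1`, then there is a nontrivial measurable
set `S ⊆ ℝ` having no `δ`-exceptional point. -/
theorem exists_set_without_exceptional_point (δ : ℝ) (hδ0 : 0 ≤ δ) (hδ1 : δ ≤ 1 / 2)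
    (hcubic : (2 * δ) ^ 3 + (2 * δ) ^ 2 + 2 * δ > 1) :
    ∃ S : Set ℝ, MeasurableSet S ∧ NontrivialSet S ∧
      ∀ p : ℝ, ¬ IsExceptionalPoint S δ p := by
  obtain ⟨c, hc0, hcδ, hc⟩ := exists_lt_one_lt_cubic hcubic
  obtain ⟨N, hN⟩ := exists_nat_add_one_le_of_one_lt_cubic hc
  obtain ⟨d, hcd, hdδ⟩ := exists_between (show c / 2 < δ by linarith)
  obtain ⟨S, hSmeas, hSnontrivial, hS⟩ :=
    (isStepPattern_cappedComb hc0).exists_forall_frequently_isExtremeScale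
      ((half_pos hc0).trans hcd) fun q hq => exists_isExtremeScale_cappedComb hc0 hcd hN hq
  exact ⟨S, hSmeas, hSnontrivial, fun p =>
    not_isExceptionalPoint_of_frequently_isExtremeScale hSmeas hdδ (hS p)⟩
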